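/- Let q > 1 be a real number and m a real number. For naturals n, x ≤ n and k, define the skew-q-Krawtchouk polynomial C_k(x,n;m) = Σ_{j=0}^{k} (−1)^j q^{2j(n−x)} q^{j(j−1)} [x;j] [n−x;k−j] γ(m−2j, k−j). Then for all naturals x ≤ n and k ≤ n, the recurrence C_{k+1}(x+1, n+1; m+2) = q^{2(k+1)} · C_{k+1}(x,n;m) − q^{2k} · C_k(x,n;m) holds. -/

import Mathlib

/-- The skew-q-nary Gaussian coefficient `[x;k]` for real `x`. -/
noncomputable def gaussQ (q x : ℝ) (k : ℕ) : ℝ :=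
  ∏ i ∈ Finset.range k, (q ^ (2 * x) - q ^ (2 * (i : ℝ))) / (q ^ (2 * (k : ℝ)) - q ^ (2 * (i : ℝ)))

/-- The skew-q-nary Gamma function `γ(x,k)`. -/
noncomputable def skewGamma (q x : ℝ) (k : ℕ) : ℝ :=
  ∏ i ∈ Finset.range k, (q ^ x - q ^ (2 * (i : ℝ)))

/-- The skew-q-Krawtchouk polynomial `C_k(x,n;m)`. -/
noncomputable def CK (q m : ℝ) (n x k : ℕ) : ℝ :=
  ∑ j ∈ Finset.range (k + 1),
    (-1 : ℝ) ^ j * q ^ (2 * j * (n - x)) * q ^ (j * (j - 1)) *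
      gaussQ q (x : ℝ) j * gaussQ q ((n : ℝ) - (x : ℝ)) (k - j) *
      skewGamma q (m - 2 * (j : ℝ)) (k - j)

theorem rpow_two_mul_natCast (q : ℝ) (i : ℕ) : q ^ (2 * (i : ℝ)) = q ^ (2 * i) := by
  rw [← Real.rpow_natCast]
  push_cast
  rfl

theorem skewGamma_succ (q y : ℝ) (k : ℕ) :
    skewGamma q y (k + 1) = skewGamma q y k * (q ^ y - q ^ (2 * k)) := by
  rw [skewGamma, Finset.prod_range_succ, rpow_two_mul_natCast, skewGamma]

theorem skewGamma_add_two_succ {q : ℝ} (hq : 0 < q) (y : ℝ) (k : ℕ) :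
    skewGamma q (y + 2) (k + 1) = (q ^ 2 * q ^ y - 1) * q ^ (2 * k) * skewGamma q y k := by
  have hy : q ^ (y + 2) = q ^ 2 * q ^ y := by
    rw [Real.rpow_add hq, Real.rpow_two, mul_comm]
  induction k with
  | zero => simp [skewGamma, hy]
  | succ k ih =>
    rw [skewGamma_succ, ih, skewGamma_succ, hy]
    ring

theorem gaussQ_eq_div (q y : ℝ) (k : ℕ) :
    gaussQ q y k = skewGamma q (2 * y) k / skewGamma q (2 * k) k := by
  rw [gaussQ, Finset.prod_div_distrib, skewGamma, skewGamma]

theorem skewGamma_self_succ {q : ℝ} (hq : 0 < q) (k : ℕ) :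
    skewGamma q (2 * (k + 1 : ℕ)) (k + 1)
      = (q ^ (2 * (k + 1)) - 1) * q ^ (2 * k) * skewGamma q (2 * k) k := by
  have h : (2 * ((k + 1 : ℕ) : ℝ)) = 2 * k + 2 := by push_cast; ring
  rw [h, skewGamma_add_two_succ hq, rpow_two_mul_natCast]
  ring

theorem pow_two_mul_succ_sub_one_ne_zero {q : ℝ} (hq : 1 < q) (k : ℕ) :
    q ^ (2 * (k + 1)) - 1 ≠ 0 :=
  (sub_pos.2 (one_lt_pow₀ hq (by omega))).ne'

theorem skewGamma_self_ne_zero {q : ℝ} (hq : 1 < q) (k : ℕ) : skewGamma q (2 * k) k ≠ 0 := by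
  have hq0 : 0 < q := by linarith
  induction k with
  | zero => simp [skewGamma]
  | succ k ih =>
    rw [skewGamma_self_succ hq0]
    exact mul_ne_zero (mul_ne_zero (pow_two_mul_succ_sub_one_ne_zero hq k) (by positivity)) ih

theorem gaussQ_zero (q y : ℝ) : gaussQ q y 0 = 1 := by simp [gaussQ]

/-- The ratio of two consecutive Gaussian coefficients. -/
theorem gaussQ_succ_mul {q : ℝ} (hq : 1 < q) (y : ℝ) (k : ℕ) :
    (q ^ (2 * (k + 1)) - 1) * q ^ (2 * k) * gaussQ q y (k + 1)
      = (q ^ (2 * y) - q ^ (2 * k)) * gaussQ q y k := by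
  have hq0 : 0 < q := by linarith
  have h1 := pow_two_mul_succ_sub_one_ne_zero hq k
  have h2 := skewGamma_self_ne_zero hq k
  rw [gaussQ_eq_div, gaussQ_eq_div, skewGamma_self_succ hq0, skewGamma_succ]
  field_simp

/-- The Pascal rule for Gaussian coefficients. -/
theorem gaussQ_add_one_succ {q : ℝ} (hq : 1 < q) (y : ℝ) (k : ℕ) :
    gaussQ q (y + 1) (k + 1) = gaussQ q y k + q ^ (2 * (k + 1)) * gaussQ q y (k + 1) := by
  have hq0 : 0 < q := by linarith
  have h1 := pow_two_mul_succ_sub_one_ne_zero hq k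
  have h2 := skewGamma_self_ne_zero hq k
  rw [gaussQ_eq_div, gaussQ_eq_div, gaussQ_eq_div, skewGamma_self_succ hq0,
    skewGamma_succ q (2 * y), mul_add 2 y 1, mul_one, skewGamma_add_two_succ hq0]
  field_simp
  ring

theorem pow_succ_mul_self (q : ℝ) (j : ℕ) :
    q ^ ((j + 1) * (j + 1 - 1)) = q ^ (j * (j - 1)) * q ^ (2 * j) := by
  rw [← pow_add]
  congr 1
  cases j with
  | zero => rfl
  | succ j => simp only [Nat.add_sub_cancel]; ring

/-- The Pascal rule applied to the first Gaussian coefficient in the summands of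
`C_{k+1}(x+1,n+1;m+2)`. -/
theorem CK_succ_eq_sum_add_sum {q : ℝ} (hq : 1 < q) (m : ℝ) (n x k : ℕ) :
    CK q (m + 2) (n + 1) (x + 1) (k + 1)
      = ∑ j ∈ Finset.range (k + 2), (-1 : ℝ) ^ j * q ^ (2 * j * (n - x)) * q ^ (j * (j - 1)) *
          (q ^ (2 * j) * gaussQ q x j) * gaussQ q ((n : ℝ) - x) (k + 1 - j) *
          skewGamma q (m - 2 * j + 2) (k + 1 - j)
        - ∑ j ∈ Finset.range (k + 1), (-1 : ℝ) ^ j * q ^ (2 * j * (n - x)) * q ^ (j * (j - 1)) *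
          q ^ (2 * j) * q ^ (2 * (n - x)) * gaussQ q x j * gaussQ q ((n : ℝ) - x) (k - j) *
          skewGamma q (m - 2 * j) (k - j) := by
  have hN : ((n + 1 : ℕ) : ℝ) - ((x + 1 : ℕ) : ℝ) = (n : ℝ) - x := by push_cast; ring
  have hm (j : ℕ) : m + 2 - 2 * (j : ℝ) = m - 2 * j + 2 := by ring
  simp only [CK, hN, hm]
  rw [Finset.sum_range_succ' _ (k + 1), Finset.sum_range_succ' _ (k + 1), add_sub_right_comm,
    ← Finset.sum_sub_distrib]
  simp only [Nat.add_sub_add_right]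
  congr 1
  · refine Finset.sum_congr rfl fun j _ => ?_
    have hj : m - 2 * ((j + 1 : ℕ) : ℝ) + 2 = m - 2 * j := by push_cast; ring
    rw [hj, Nat.cast_add x 1, Nat.cast_one, gaussQ_add_one_succ hq, pow_succ_mul_self]
    ring
  · simp [gaussQ_zero]

theorem stmt2 (q : ℝ) (hq : 1 < q) (m : ℝ) (n x k : ℕ) (hx : x ≤ n) (hk : k ≤ n) :
    CK q (m + 2) (n + 1) (x + 1) (k + 1)
      = q ^ (2 * (k + 1)) * CK q m n x (k + 1) - q ^ (2 * k) * CK q m n x k := by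
  have hq0 : 0 < q := by linarith
  have hN : q ^ (2 * ((n : ℝ) - x)) = q ^ (2 * (n - x)) := by
    rw [← Nat.cast_sub hx, rpow_two_mul_natCast]
  rw [CK_succ_eq_sum_add_sum hq, CK, CK, Finset.sum_range_succ _ (k + 1),
    Finset.sum_range_succ _ (k + 1), mul_add (q ^ _), add_sub_right_comm, add_sub_right_comm,
    Finset.mul_sum, Finset.mul_sum, ← Finset.sum_sub_distrib, ← Finset.sum_sub_distrib]
  congr 1
  · refine Finset.sum_congr rfl fun j hj => ?_
    obtain ⟨l, rfl⟩ := Nat.exists_eq_add_of_le (Finset.mem_range_succ_iff.1 hj)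
    have h1 : j + l + 1 - j = l + 1 := by omega
    have hratio := gaussQ_succ_mul hq ((n : ℝ) - x) l
    rw [hN] at hratio
    rw [h1, Nat.add_sub_cancel_left, skewGamma_add_two_succ hq0, skewGamma_succ]
    linear_combination (-1 : ℝ) ^ j * q ^ (2 * j * (n - x)) * q ^ (j * (j - 1)) *
      q ^ (2 * j) * gaussQ q x j * skewGamma q (m - 2 * j) l * hratio
  · simp only [Nat.sub_self, skewGamma, Finset.range_zero, Finset.prod_empty]
    ring
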